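/- Let n be a positive integer and S ⊆ Fin n. Let B be a symmetric real n×n matrix, and let Â be a symmetric real n×n matrix with nonnegative entries such that Â_{ij} = 0 unless both i ∈ S and j ∈ S. Let u be a unit (ℓ²-norm one) eigenvector of B + Â for its largest eigenvalue, write u = u_S + u_B where u_S agrees with u on coordinates in S and is zero elsewhere, and set δ = ‖u_S‖₂². Then ‖Â‖ − ‖B_S‖ ≤ δ(‖Â‖ + ‖B_S‖) + 2√(δ(1−δ))·‖B_{SN}‖ + (1−δ)‖B_N‖. -/

import Mathlib

/-- The spectral norm (ℓ² operator norm) of a real matrix. -/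
noncomputable def specNorm {m n : Type*} [Fintype m] [Fintype n] [DecidableEq n]
    (M : Matrix m n ℝ) : ℝ :=
  ‖LinearMap.toContinuousLinearMap (Matrix.toEuclideanLin M)‖

/-- The principal submatrix of `B` on the rows and columns in `S`. -/
def blockS {n : ℕ} (S : Finset (Fin n)) (B : Matrix (Fin n) (Fin n) ℝ) :
    Matrix {i : Fin n // i ∈ S} {i : Fin n // i ∈ S} ℝ :=
  B.submatrix Subtype.val Subtype.val

/-- The principal submatrix of `B` on the rows and columns in the complement of `S`. -/
def blockN {n : ℕ} (S : Finset (Fin n)) (B : Matrix (Fin n) (Fin n) ℝ) :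
    Matrix {i : Fin n // i ∉ S} {i : Fin n // i ∉ S} ℝ :=
  B.submatrix Subtype.val Subtype.val

/-- The off-diagonal block of `B` with rows in `S` and columns in the complement. -/
def blockSN {n : ℕ} (S : Finset (Fin n)) (B : Matrix (Fin n) (Fin n) ℝ) :
    Matrix {i : Fin n // i ∈ S} {i : Fin n // i ∉ S} ℝ :=
  B.submatrix Subtype.val Subtype.val

open Matrix Finset

lemma aux_sum {n : ℕ} (S : Finset (Fin n)) (f : Fin n → ℝ) :
    ∑ i, f i = ∑ i : {i // i ∈ S}, f i + ∑ i : {i // i ∉ S}, f i := by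
  rw [← Fintype.sum_subtype_add_sum_subtype (fun i => i ∈ S) f]
  congr!

lemma aux_bil {m k : Type*} [Fintype m] [Fintype k] [DecidableEq k]
    (M : Matrix m k ℝ) (x : m → ℝ) (y : k → ℝ) :
    |∑ i, ∑ j, x i * M i j * y j| ≤
      specNorm M * (Real.sqrt (∑ i, x i ^ 2) * Real.sqrt (∑ j, y j ^ 2)) := by
  have h1 := abs_real_inner_le_norm (WithLp.toLp 2 x)
    (LinearMap.toContinuousLinearMap (Matrix.toEuclideanLin M) (WithLp.toLp 2 y))
  have h2 := (LinearMap.toContinuousLinearMap (Matrix.toEuclideanLin M)).le_opNorm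
    (WithLp.toLp 2 y)
  have e : inner ℝ (WithLp.toLp 2 x)
    (LinearMap.toContinuousLinearMap (Matrix.toEuclideanLin M) (WithLp.toLp 2 y)) =
      ∑ i, ∑ j, x i * M i j * y j := by
    simp [PiLp.inner_apply, Matrix.mulVec, dotProduct, Finset.sum_mul, Finset.mul_sum]
    refine Finset.sum_congr rfl fun i _ => Finset.sum_congr rfl fun j _ => by ring
  rw [e] at h1
  have ex : ‖WithLp.toLp 2 x‖ = Real.sqrt (∑ i, x i ^ 2) := by
    simp [EuclideanSpace.norm_eq]
  have ey : ‖WithLp.toLp 2 y‖ = Real.sqrt (∑ i, y i ^ 2) := by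
    simp [EuclideanSpace.norm_eq]
  rw [ex] at h1
  rw [ey] at h2
  calc _ ≤ _ := h1
    _ ≤ Real.sqrt (∑ i, x i ^ 2) * (specNorm M * Real.sqrt (∑ j, y j ^ 2)) :=
      mul_le_mul_of_nonneg_left h2 (Real.sqrt_nonneg _)
    _ = _ := by ring

lemma aux_nonneg {m k : Type*} [Fintype m] [Fintype k] [DecidableEq k]
    (M : Matrix m k ℝ) : 0 ≤ specNorm M := norm_nonneg _

lemma aux_split {n : ℕ} (S : Finset (Fin n)) (B : Matrix (Fin n) (Fin n) ℝ) (hB : B.IsSymm)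
    (x : Fin n → ℝ) :
    ∑ i, ∑ j, x i * B i j * x j =
      (∑ i : {i // i ∈ S}, ∑ j : {i // i ∈ S}, x i * blockS S B i j * x j) +
      2 * (∑ i : {i // i ∈ S}, ∑ j : {i // i ∉ S}, x i * blockSN S B i j * x j) +
      (∑ i : {i // i ∉ S}, ∑ j : {i // i ∉ S}, x i * blockN S B i j * x j) := by
  have h : ∀ f : Fin n → ℝ, ∑ i, f i = ∑ i : {i // i ∈ S}, f i + ∑ i : {i // i ∉ S}, f i :=
    fun f => by
      rw [← Fintype.sum_subtype_add_sum_subtype (fun i => i ∈ S) f]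
      congr!
  rw [h]
  simp only [h (fun j => x _ * B _ j * x j), Finset.sum_add_distrib]
  have hs : (∑ i : {i // i ∉ S}, ∑ j : {i // i ∈ S}, x i * B i j * x j) =
      ∑ i : {i // i ∈ S}, ∑ j : {i // i ∉ S}, x i * B i j * x j := by
    rw [Finset.sum_comm]
    refine Finset.sum_congr rfl fun i _ => Finset.sum_congr rfl fun j _ => ?_
    rw [hB.apply]; ring
  rw [hs]
  simp only [blockS, blockSN, blockN, Matrix.submatrix_apply]
  ring

lemma aux_form {n : ℕ} (M : Matrix (Fin n) (Fin n) ℝ) (x y : Fin n → ℝ) :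
    x ⬝ᵥ (M *ᵥ y) = ∑ i, ∑ j, x i * M i j * y j := by
  simp [Matrix.mulVec, dotProduct, Finset.mul_sum, mul_assoc]

lemma aux_ray {n : ℕ} (M : Matrix (Fin n) (Fin n) ℝ) (hM : M.IsSymm) (lam : ℝ)
    (hmax : ∀ (μ : ℝ) (v : Fin n → ℝ), v ≠ 0 → M.mulVec v = μ • v → μ ≤ lam)
    (x : Fin n → ℝ) : ∑ i, ∑ j, x i * M i j * x j ≤ lam * ∑ i, x i ^ 2 := by
  have hH : (lam • (1 : Matrix (Fin n) (Fin n) ℝ) - M).IsHermitian := by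
    rw [Matrix.IsHermitian, Matrix.conjTranspose_eq_transpose_of_trivial]
    simp [hM.eq]
  have hP : (lam • (1 : Matrix (Fin n) (Fin n) ℝ) - M).PosSemidef := by
    rw [hH.posSemidef_iff_eigenvalues_nonneg]
    intro i
    have h1 := hH.mulVec_eigenvectorBasis i
    have h0 : (hH.eigenvectorBasis i).ofLp ≠ 0 := by
      intro h
      have := hH.eigenvectorBasis.orthonormal.ne_zero i
      exact this (by ext j; simp [h])
    have h2 := hmax (lam - hH.eigenvalues i) _ h0 (by
      rw [Matrix.sub_mulVec, Matrix.smul_mulVec, Matrix.one_mulVec] at h1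
      rw [sub_smul, ← h1]; simp)
    simp only [Pi.zero_apply]; linarith
  have := hP.dotProduct_mulVec_nonneg x
  rw [star_trivial, Matrix.sub_mulVec, Matrix.smul_mulVec, Matrix.one_mulVec, dotProduct_sub,
    dotProduct_smul, aux_form] at this
  have e : x ⬝ᵥ x = ∑ i, x i ^ 2 := by simp [dotProduct, sq]
  rw [e, smul_eq_mul] at this
  linarith

/-- A symmetric matrix whose quadratic form is bounded by `c` has spectral norm at most `c`. -/
lemma aux_norm {n : ℕ} (M : Matrix (Fin n) (Fin n) ℝ) (hM : M.IsSymm) (c : ℝ) (hc : 0 ≤ c)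
    (h : ∀ x : Fin n → ℝ, |∑ i, ∑ j, x i * M i j * x j| ≤ c * ∑ i, x i ^ 2) :
    specNorm M ≤ c := by
  refine ContinuousLinearMap.opNorm_le_bound _ hc fun x => ?_
  -- polarization
  have pol : ∀ x y : Fin n → ℝ,
      2 * (y ⬝ᵥ (M *ᵥ x)) ≤ c * (x ⬝ᵥ x + y ⬝ᵥ y) := by
    intro x y
    have h1 := (abs_le.1 (h (x + y))).2
    have h2 := (abs_le.1 (h (x - y))).1
    have e : ∀ z : Fin n → ℝ, ∑ i, z i ^ 2 = z ⬝ᵥ z := by simp [dotProduct, sq]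
    rw [e, ← aux_form] at h1 h2
    have s : x ⬝ᵥ (M *ᵥ y) = y ⬝ᵥ (M *ᵥ x) := by
      rw [Matrix.dotProduct_mulVec, ← Matrix.mulVec_transpose, hM.eq, dotProduct_comm]
    simp only [Matrix.mulVec_add, Matrix.mulVec_sub, dotProduct_add, add_dotProduct,
      dotProduct_sub, sub_dotProduct, s, dotProduct_comm y x] at h1 h2
    nlinarith
  have nx : ‖x‖ ^ 2 = x.ofLp ⬝ᵥ x.ofLp := by
    rw [EuclideanSpace.norm_sq_eq]; simp [dotProduct, sq]
  set T := LinearMap.toContinuousLinearMap (Matrix.toEuclideanLin M)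
  have nT : ‖T x‖ ^ 2 = (M *ᵥ x.ofLp) ⬝ᵥ (M *ᵥ x.ofLp) := by
    rw [EuclideanSpace.norm_sq_eq]; simp [dotProduct, sq, T, Matrix.toEuclideanLin, Matrix.toLin'_apply]
  have key : ∀ t : ℝ, 2 * t * ‖T x‖ ^ 2 ≤ c * (‖x‖ ^ 2 + t ^ 2 * ‖T x‖ ^ 2) := by
    intro t
    have := pol x.ofLp (t • (M *ᵥ x.ofLp))
    simp only [smul_dotProduct, dotProduct_smul, smul_eq_mul, ← nT, ← nx] at this
    nlinarith
  rcases (norm_nonneg (T x)).eq_or_lt with h0 | h0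
  · rw [← h0]; positivity
  · have k := key (‖x‖ / ‖T x‖)
    have e1 : 2 * (‖x‖ / ‖T x‖) * ‖T x‖ ^ 2 = 2 * ‖x‖ * ‖T x‖ := by field_simp
    have e2 : (‖x‖ / ‖T x‖) ^ 2 * ‖T x‖ ^ 2 = ‖x‖ ^ 2 := by field_simp
    rw [e1, e2] at k
    have hx : 0 < ‖x‖ := by
      rcases (norm_nonneg x).eq_or_lt with h3 | h3
      · have : x = 0 := norm_eq_zero.1 h3.symm
        rw [this] at h0; simp at h0
      · exact h3
    nlinarith

/-- Let B be symmetric, Â symmetric with nonnegative entries supported on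
S×S, and u a unit eigenvector of B + Â for its largest eigenvalue, u = u_S + u_B,
δ = ‖u_S‖₂². Then ‖Â‖ − ‖B_S‖ ≤ δ(‖Â‖ + ‖B_S‖) + 2√(δ(1−δ))‖B_{SN}‖ + (1−δ)‖B_N‖. -/
theorem stmt7 (n : ℕ) (hn : 0 < n) (S : Finset (Fin n))
    (B Ahat : Matrix (Fin n) (Fin n) ℝ) (hB : B.IsSymm) (hA : Ahat.IsSymm)
    (hnonneg : ∀ i j, 0 ≤ Ahat i j)
    (hsupp : ∀ i j, ¬(i ∈ S ∧ j ∈ S) → Ahat i j = 0)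
    (lam : ℝ) (u uS uB : Fin n → ℝ)
    (heig : (B + Ahat).mulVec u = lam • u)
    (hmax : ∀ (μ : ℝ) (v : Fin n → ℝ), v ≠ 0 → (B + Ahat).mulVec v = μ • v → μ ≤ lam)
    (hunit : ∑ i, u i ^ 2 = 1)
    (hdecomp : u = uS + uB)
    (huS : ∀ i, i ∉ S → uS i = 0) (huSe : ∀ i, i ∈ S → uS i = u i)
    (δ : ℝ) (hδ : δ = ∑ i, uS i ^ 2) :
    specNorm Ahat - specNorm (blockS S B) ≤
      δ * (specNorm Ahat + specNorm (blockS S B)) +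
        2 * Real.sqrt (δ * (1 - δ)) * specNorm (blockSN S B) +
        (1 - δ) * specNorm (blockN S B) := by
  have hSS : ∀ x : Fin n → ℝ, |∑ i : {i // i ∈ S}, ∑ j : {i // i ∈ S}, x i * blockS S B i j * x j|
      ≤ specNorm (blockS S B) * ∑ i : {i // i ∈ S}, x i ^ 2 := fun x => by
    have := aux_bil (blockS S B) (fun i => x i) (fun i => x i)
    rwa [Real.mul_self_sqrt (by positivity)] at this
  have h : ∀ f : Fin n → ℝ, ∑ i, f i = ∑ i : {i // i ∈ S}, f i + ∑ i : {i // i ∉ S}, f i :=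
    aux_sum S
  have hM : (B + Ahat).IsSymm := hB.add hA
  have hδ1 : δ = ∑ i : {i // i ∈ S}, u i ^ 2 := by
    rw [hδ, h]
    have : ∑ i : {i // i ∉ S}, uS i ^ 2 = 0 := Finset.sum_eq_zero fun i _ => by
      rw [huS i i.2]; simp
    rw [this, add_zero]
    exact Finset.sum_congr rfl fun i _ => by rw [huSe i i.2]
  have hδ2 : 1 - δ = ∑ i : {i // i ∉ S}, u i ^ 2 := by
    rw [← hunit, h, hδ1]; ring
  have d0 : 0 ≤ δ := by rw [hδ1]; positivity
  have d1 : 0 ≤ 1 - δ := by rw [hδ2]; positivity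
  have add_form : ∀ x : Fin n → ℝ, ∑ i, ∑ j, x i * (B + Ahat) i j * x j =
      ∑ i, ∑ j, x i * B i j * x j + ∑ i, ∑ j, x i * Ahat i j * x j := fun x => by
    simp [mul_add, add_mul, Finset.sum_add_distrib]
  have Asupp : ∀ x y : Fin n → ℝ, (∀ i ∈ S, x i = y i) →
      ∑ i, ∑ j, x i * Ahat i j * x j = ∑ i, ∑ j, y i * Ahat i j * y j := fun x y hxy => by
    refine Finset.sum_congr rfl fun i _ => Finset.sum_congr rfl fun j _ => ?_
    by_cases hij : i ∈ S ∧ j ∈ S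
    · rw [hxy i hij.1, hxy j hij.2]
    · rw [hsupp i j hij]; simp
  -- upper bound
  have up : lam ≤ δ * (specNorm Ahat + specNorm (blockS S B)) +
        2 * Real.sqrt (δ * (1 - δ)) * specNorm (blockSN S B) +
        (1 - δ) * specNorm (blockN S B) := by
    have e : lam = ∑ i, ∑ j, u i * (B + Ahat) i j * u j := by
      rw [← aux_form, heig, dotProduct_smul]
      have : u ⬝ᵥ u = 1 := by rw [← hunit]; simp [dotProduct, sq]
      rw [this]; simp
    rw [add_form, aux_split S B hB, Asupp u uS fun i hi => (huSe i hi).symm] at e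
    have b1 := (abs_le.1 (hSS u)).2
    have b2 := (abs_le.1 (aux_bil (blockSN S B) (fun i => u i) (fun i => u i))).2
    have b3 := (abs_le.1 (aux_bil (blockN S B) (fun i => u i) (fun i => u i))).2
    have b4 := (abs_le.1 (aux_bil Ahat uS uS)).2
    rw [← hδ1, ← hδ2, ← Real.sqrt_mul d0] at b2
    rw [← hδ2, Real.mul_self_sqrt d1] at b3
    rw [← hδ, Real.mul_self_sqrt d0] at b4
    rw [← hδ1] at b1
    linarith
  have nS := aux_nonneg (blockS S B)
  have nSN := aux_nonneg (blockSN S B)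
  have nN := aux_nonneg (blockN S B)
  have nA := aux_nonneg Ahat
  have low : specNorm Ahat ≤ max (lam + specNorm (blockS S B)) 0 := by
    refine aux_norm Ahat hA _ (le_max_right _ _) fun x => ?_
    set c := max (lam + specNorm (blockS S B)) 0
    set z : Fin n → ℝ := fun i => if i ∈ S then |x i| else 0 with hz
    have z1 : |∑ i, ∑ j, x i * Ahat i j * x j| ≤ ∑ i, ∑ j, z i * Ahat i j * z j := by
      rw [Asupp z (fun i => |x i|) fun i hi => by simp [hz, hi]]
      refine (Finset.abs_sum_le_sum_abs _ _).trans (Finset.sum_le_sum fun i _ => ?_)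
      refine (Finset.abs_sum_le_sum_abs _ _).trans (Finset.sum_le_sum fun j _ => ?_)
      rw [abs_mul, abs_mul, abs_of_nonneg (hnonneg i j)]
    have z0 : ∀ i : {i // i ∉ S}, z i = 0 := fun i => by simp [hz, i.2]
    have z2 := aux_ray _ hM lam hmax z
    have z3 := (abs_le.1 (hSS z)).1
    have z4 : ∑ i, z i ^ 2 = ∑ i : {i // i ∈ S}, z i ^ 2 := by
      rw [h]; simp [z0]
    rw [← z4] at z3
    rw [add_form, aux_split S B hB] at z2
    simp only [z0, mul_zero, zero_mul, Finset.sum_const_zero, add_zero] at z2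
    have z5 : ∑ i, z i ^ 2 ≤ ∑ i, x i ^ 2 := Finset.sum_le_sum fun i _ => by
      by_cases hi : i ∈ S
      · simp [hz, hi]
      · simp [hz, hi]; positivity
    have z6 : 0 ≤ ∑ i, z i ^ 2 := by positivity
    have c1 : lam + specNorm (blockS S B) ≤ c := le_max_left _ _
    have c0 : 0 ≤ c := le_max_right _ _
    have := mul_le_mul_of_nonneg_right c1 z6
    have := mul_le_mul_of_nonneg_left z5 c0
    linarith
  rcases le_max_iff.1 low with h1 | h1
  · linarith
  · have : 0 ≤ δ * (specNorm Ahat + specNorm (blockS S B)) +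
        2 * Real.sqrt (δ * (1 - δ)) * specNorm (blockSN S B) +
        (1 - δ) * specNorm (blockN S B) := by positivity
    linarith
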